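/- arXiv:2604.23140 — 3 statements merged into one kernel-verified Lean document; each statement's English description precedes it below -/
import Mathlib

section
/- Let n, R, m₀ be finite types; let c̃ : n → ℝ with 0 ≤ c̃ (reduced production costs), cU : R → ℝ with 0 ≤ cU (unit penalty costs), λ ≥ 0 (service level), D : Matrix R n ℝ (demand-assignment matrix), A : Matrix m₀ n ℝ and b : m₀ → ℝ (demand-independent constraints). For ξ : R → ℝ define the feasible set F(ξ) = {y : n → ℝ | 0 ≤ y ∧ D.mulVec y ≥ λ • ξ ∧ A.mulVec y ≥ b} (all inequalities componentwise) and the recourse value Q(ξ) = sInf {c̃ ⬝ᵥ y + cU ⬝ᵥ ξ | y ∈ F(ξ)}. If ξ ≤ ξ' componentwise and F(ξ') is nonempty, then Q(ξ) ≤ Q(ξ'). (This is the monotonicity assertion of the paper's Proposition 3: after eliminating the unmet-demand variables, the second-stage recourse function is monotonically non-decreasing in each demand coordinate.) -/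
open Matrix

/-- The decisions in `Y` (those meeting every demand-independent constraint) whose output `service`
covers the fraction `lam` of the demand `ξ`. Neither `Y` nor `service` need be linear; in
the paper `Y = {y | 0 ≤ y ∧ b ≤ A y}` and `service y = D y`. -/
def recourseFeasibleSet {E R : Type*} (Y : Set E) (service : E → R → ℝ) (lam : ℝ)
    (ξ : R → ℝ) : Set E :=
  {y ∈ Y | lam • ξ ≤ service y}

/-- The second-stage value `Q(ξ)`: the least production cost over the feasible decisions, plus the
penalty charged on the demand. As a real infimum it takes the junk value `0` when no decision
is feasible or the cost is unbounded below. -/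
noncomputable def recourseValue {E R : Type*} [Fintype R] (Y : Set E) (service : E → R → ℝ)
    (lam : ℝ) (cost : E → ℝ) (cU : R → ℝ) (ξ : R → ℝ) : ℝ :=
  sInf ((fun y => cost y + cU ⬝ᵥ ξ) '' recourseFeasibleSet Y service lam ξ)

theorem recourseFeasibleSet_antitone {E R : Type*} (Y : Set E) (service : E → R → ℝ) {lam : ℝ}
    (hlam : 0 ≤ lam) : Antitone (recourseFeasibleSet Y service lam) :=
  fun _ _ hξ _ hy => ⟨hy.1, (smul_le_smul_of_nonneg_left hξ hlam).trans hy.2⟩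

theorem csInf_image_le_csInf_image {ι α : Type*} [ConditionallyCompleteLattice α]
    {s t : Set ι} {f g : ι → α} (hf : BddBelow (f '' s)) (ht : t.Nonempty) (hts : t ⊆ s)
    (hfg : ∀ i ∈ t, f i ≤ g i) : sInf (f '' s) ≤ sInf (g '' t) :=
  le_csInf (ht.image g) <| Set.forall_mem_image.2 fun i hi =>
    csInf_le_of_le hf (Set.mem_image_of_mem f (hts hi)) (hfg i hi)

theorem recourse_monotone_general {E R : Type*} [Fintype R] (Y : Set E) (service : E → R → ℝ)
    {lam : ℝ} (hlam : 0 ≤ lam) (cost : E → ℝ) {cU : R → ℝ} (hcU : 0 ≤ cU)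
    {ξ ξ' : R → ℝ} (hξ : ξ ≤ ξ')
    (hcost : BddBelow (cost '' recourseFeasibleSet Y service lam ξ))
    (hne : (recourseFeasibleSet Y service lam ξ').Nonempty) :
    recourseValue Y service lam cost cU ξ ≤ recourseValue Y service lam cost cU ξ' := by
  have hpenalty : cU ⬝ᵥ ξ ≤ cU ⬝ᵥ ξ' := dotProduct_le_dotProduct_of_nonneg_left hξ hcU
  have hvalue : BddBelow ((fun y => cost y + cU ⬝ᵥ ξ) '' recourseFeasibleSet Y service lam ξ) := by
    simpa only [Set.image_image] using (add_left_mono (a := cU ⬝ᵥ ξ)).map_bddBelow hcost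
  exact csInf_image_le_csInf_image hvalue hne (recourseFeasibleSet_antitone Y service hlam hξ)
    fun y _ => add_le_add_right hpenalty (cost y)

theorem bddBelow_image_dotProduct_of_nonneg {n : Type*} [Fintype n] {c : n → ℝ} (hc : 0 ≤ c)
    {s : Set (n → ℝ)} (hs : ∀ y ∈ s, 0 ≤ y) : BddBelow ((c ⬝ᵥ ·) '' s) :=
  ⟨0, Set.forall_mem_image.2 fun y hy => dotProduct_nonneg_of_nonneg hc (hs y hy)⟩

theorem mem_recourseFeasibleSet_mulVec {n R m₀ : Type*} [Fintype n] {D : Matrix R n ℝ}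
    {A : Matrix m₀ n ℝ} {b : m₀ → ℝ} {lam : ℝ} {ξ : R → ℝ} {y : n → ℝ} :
    y ∈ recourseFeasibleSet {y | 0 ≤ y ∧ b ≤ A.mulVec y} D.mulVec lam ξ ↔
      0 ≤ y ∧ lam • ξ ≤ D.mulVec y ∧ b ≤ A.mulVec y :=
  and_right_comm.trans and_assoc

theorem recourseValue_mulVec {n R m₀ : Type*} [Fintype n] [Fintype R] (c : n → ℝ) (cU : R → ℝ)
    (lam : ℝ) (D : Matrix R n ℝ) (A : Matrix m₀ n ℝ) (b : m₀ → ℝ) (ξ : R → ℝ) :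
    recourseValue {y | 0 ≤ y ∧ b ≤ A.mulVec y} D.mulVec lam (c ⬝ᵥ ·) cU ξ =
      sInf {v : ℝ | ∃ y : n → ℝ,
        (0 ≤ y ∧ lam • ξ ≤ D.mulVec y ∧ b ≤ A.mulVec y) ∧ v = c ⬝ᵥ y + cU ⬝ᵥ ξ} :=
  congrArg sInf <| Set.ext fun _ =>
    exists_congr fun _ => and_congr mem_recourseFeasibleSet_mulVec eq_comm

/-- Proposition 3 (monotonicity): after eliminating the unmet-demand variables,
the second-stage recourse value is monotonically non-decreasing in the demand. -/
theorem recourse_monotone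
    {n R m₀ : Type*} [Fintype n] [Fintype R] [Fintype m₀]
    (ctilde : n → ℝ) (hc : 0 ≤ ctilde) (cU : R → ℝ) (hcU : 0 ≤ cU)
    (lam : ℝ) (hlam : 0 ≤ lam)
    (D : Matrix R n ℝ) (A : Matrix m₀ n ℝ) (b : m₀ → ℝ)
    (ξ ξ' : R → ℝ) (hξ : ξ ≤ ξ')
    (hne : ∃ y : n → ℝ, 0 ≤ y ∧ lam • ξ' ≤ D.mulVec y ∧ b ≤ A.mulVec y) :
    sInf {v : ℝ | ∃ y : n → ℝ,
        (0 ≤ y ∧ lam • ξ ≤ D.mulVec y ∧ b ≤ A.mulVec y) ∧ v = ctilde ⬝ᵥ y + cU ⬝ᵥ ξ} ≤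
      sInf {v : ℝ | ∃ y : n → ℝ,
        (0 ≤ y ∧ lam • ξ' ≤ D.mulVec y ∧ b ≤ A.mulVec y) ∧ v = ctilde ⬝ᵥ y + cU ⬝ᵥ ξ'} := by
  simpa only [recourseValue_mulVec] using
    recourse_monotone_general {y | 0 ≤ y ∧ b ≤ A.mulVec y} D.mulVec hlam (ctilde ⬝ᵥ ·) hcU hξ
      (bddBelow_image_dotProduct_of_nonneg hc fun _ hy => hy.1.1)
      (hne.imp fun _ => mem_recourseFeasibleSet_mulVec.2)
end

section
/- Let m, n be finite types, A : Matrix m n ℝ, c : n → ℝ, and b₁ b₂ : m → ℝ, and let θ ∈ [0, 1]. Define F(b) = {y : n → ℝ | 0 ≤ y ∧ A.mulVec y ≥ b} and V(b) = sInf {c ⬝ᵥ y | y ∈ F(b)}. Suppose F(b₁) and F(b₂) are nonempty and the sets {c ⬝ᵥ y | y ∈ F(b₁)}, {c ⬝ᵥ y | y ∈ F(b₂)}, and {c ⬝ᵥ y | y ∈ F(θ • b₁ + (1−θ) • b₂)} are bounded below. Then V(θ • b₁ + (1−θ) • b₂) ≤ θ · V(b₁) + (1−θ) · V(b₂). (Convexity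 of the optimal value of a linear program as a function of its right-hand side; together with monotonicity this yields the piecewise-linear, non-decreasing behaviour of the recourse function asserted in the paper's Proposition 3.) -/
/-!
The hypograph `{(y, b) | y ∈ K ∧ b ≤ g y}` of a concave constraint map is convex, so convex
combinations of points feasible for `b₁` and `b₂` are feasible for the same combination of `b₁`
and `b₂`, at a cost at most the combination of the two costs. Taking the infimum over the two
points independently gives convexity of the optimal value.
-/

open Matrix

section LinearCombination

variable {S T : Set ℝ} {a b x : ℝ}

lemma le_mul_sInf (hS : S.Nonempty) (ha : 0 ≤ a) (h : ∀ s ∈ S, x ≤ a * s) : x ≤ a * sInf S := by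
  rw [← smul_eq_mul, ← Real.sInf_smul_of_nonneg ha]
  exact le_csInf hS.smul_set (Set.forall_mem_image.2 h)

lemma le_mul_sInf_add_mul_sInf (hS : S.Nonempty) (hT : T.Nonempty) (ha : 0 ≤ a) (hb : 0 ≤ b)
    (h : ∀ s ∈ S, ∀ t ∈ T, x ≤ a * s + b * t) : x ≤ a * sInf S + b * sInf T :=
  sub_le_iff_le_add.1 <| le_mul_sInf hS ha fun s hs ↦
    sub_le_comm.1 <| le_mul_sInf hT hb fun t ht ↦
      sub_le_iff_le_add'.2 (h s hs t ht)

end LinearCombination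

section ConvexProgram

variable {E F : Type*}

/-- The feasible set of a program with ground set `K`, constraint map `g` and right-hand side `b`;
linear programs have `K = Set.Ici 0` and `g = A.mulVec`. -/
def feasibleSet [LE F] (K : Set E) (g : E → F) (b : F) : Set E :=
  {y | y ∈ K ∧ b ≤ g y}

/-- The set of costs `f y` attained at the feasible points of a program, whose infimum is the
optimal value. It is the image `f '' feasibleSet K g b`, with the equation oriented as `v = f y`
so that it unfolds to the usual set-builder form for linear programs. -/
def attainableValues [LE F] (K : Set E) (f : E → ℝ) (g : E → F) (b : F) : Set ℝ :=
  {v | ∃ y, y ∈ feasibleSet K g b ∧ v = f y}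

lemma attainableValues_nonempty [LE F] {K : Set E} {g : E → F} {b : F}
    (h : (feasibleSet K g b).Nonempty) (f : E → ℝ) : (attainableValues K f g b).Nonempty :=
  let ⟨y, hy⟩ := h
  ⟨f y, y, hy, rfl⟩

section Feasible

variable {𝕜 : Type*} [Semiring 𝕜] [PartialOrder 𝕜] [AddCommMonoid E] [SMul 𝕜 E]
  [AddCommMonoid F] [PartialOrder F] [IsOrderedAddMonoid F] [Module 𝕜 F] [PosSMulMono 𝕜 F]
  {K : Set E} {g : E → F} {b₁ b₂ : F} {y₁ y₂ : E} {α β : 𝕜}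

lemma smul_add_smul_mem_feasibleSet (hg : ConcaveOn 𝕜 K g) (hy₁ : y₁ ∈ feasibleSet K g b₁)
    (hy₂ : y₂ ∈ feasibleSet K g b₂) (hα : 0 ≤ α) (hβ : 0 ≤ β) (hαβ : α + β = 1) :
    α • y₁ + β • y₂ ∈ feasibleSet K g (α • b₁ + β • b₂) :=
  hg.convex_hypograph (x := (y₁, b₁)) hy₁ (y := (y₂, b₂)) hy₂ hα hβ hαβ

end Feasible

variable [AddCommMonoid E] [SMul ℝ E]
  [AddCommMonoid F] [PartialOrder F] [IsOrderedAddMonoid F] [Module ℝ F] [PosSMulMono ℝ F]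
  {K : Set E} {f : E → ℝ} {g : E → F} {b₁ b₂ : F} {α β : ℝ}

theorem lp_value_convex_rhs_general (hf : ConvexOn ℝ K f) (hg : ConcaveOn ℝ K g)
    (hα : 0 ≤ α) (hβ : 0 ≤ β) (hαβ : α + β = 1)
    (hne₁ : (feasibleSet K g b₁).Nonempty) (hne₂ : (feasibleSet K g b₂).Nonempty)
    (hbdd : BddBelow (attainableValues K f g (α • b₁ + β • b₂))) :
    sInf (attainableValues K f g (α • b₁ + β • b₂)) ≤
      α * sInf (attainableValues K f g b₁) + β * sInf (attainableValues K f g b₂) := by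
  refine le_mul_sInf_add_mul_sInf (attainableValues_nonempty hne₁ f)
    (attainableValues_nonempty hne₂ f) hα hβ ?_
  rintro _ ⟨y₁, hy₁, rfl⟩ _ ⟨y₂, hy₂, rfl⟩
  have hfeasible := smul_add_smul_mem_feasibleSet hg hy₁ hy₂ hα hβ hαβ
  calc sInf (attainableValues K f g (α • b₁ + β • b₂))
      ≤ f (α • y₁ + β • y₂) := csInf_le hbdd ⟨_, hfeasible, rfl⟩
    _ ≤ α * f y₁ + β * f y₂ := hf.2 hy₁.1 hy₂.1 hα hβ hαβ

end ConvexProgram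

/-- Convexity of the optimal value of a linear program in its right-hand side. -/
theorem lp_value_convex_rhs
    {m n : Type*} [Fintype m] [Fintype n]
    (A : Matrix m n ℝ) (c : n → ℝ) (b₁ b₂ : m → ℝ)
    (θ : ℝ) (hθ : θ ∈ Set.Icc (0 : ℝ) 1)
    (hne₁ : ∃ y : n → ℝ, 0 ≤ y ∧ b₁ ≤ A.mulVec y)
    (hne₂ : ∃ y : n → ℝ, 0 ≤ y ∧ b₂ ≤ A.mulVec y)
    (hbdd₁ : BddBelow {v : ℝ | ∃ y : n → ℝ, (0 ≤ y ∧ b₁ ≤ A.mulVec y) ∧ v = c ⬝ᵥ y})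
    (hbdd₂ : BddBelow {v : ℝ | ∃ y : n → ℝ, (0 ≤ y ∧ b₂ ≤ A.mulVec y) ∧ v = c ⬝ᵥ y})
    (hbddθ : BddBelow {v : ℝ | ∃ y : n → ℝ,
      (0 ≤ y ∧ θ • b₁ + (1 - θ) • b₂ ≤ A.mulVec y) ∧ v = c ⬝ᵥ y}) :
    sInf {v : ℝ | ∃ y : n → ℝ,
        (0 ≤ y ∧ θ • b₁ + (1 - θ) • b₂ ≤ A.mulVec y) ∧ v = c ⬝ᵥ y} ≤
      θ * sInf {v : ℝ | ∃ y : n → ℝ, (0 ≤ y ∧ b₁ ≤ A.mulVec y) ∧ v = c ⬝ᵥ y} +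
        (1 - θ) * sInf {v : ℝ | ∃ y : n → ℝ, (0 ≤ y ∧ b₂ ≤ A.mulVec y) ∧ v = c ⬝ᵥ y} :=
  lp_value_convex_rhs_general ((dotProductBilin ℝ ℝ c).convexOn (convex_Ici 0))
    (A.mulVecLin.concaveOn (convex_Ici 0)) hθ.1 (sub_nonneg.2 hθ.2) (add_sub_cancel θ 1)
    hne₁ hne₂ hbddθ
end

section
/- Let ι be a finite type, L U : ι → ℝ with L i ≤ U i for all i, and let g : (ι → ℝ) → ℝ be convex on Set.Icc L U. Let ξ : Fin m → (ι → ℝ) with ξ i ∈ Set.Icc L U for each i, and p : Fin m → ℝ with 0 ≤ p and ∑ i, p i = 1. Then there exist m' : ℕ, vertex scenarios ζ : Fin m' → (ι → ℝ) with ζ j ∈ Set.Icc L U and ζ j i = L i or ζ j i = U i for every i, and weights w : Fin m' → ℝ with 0 ≤ w and ∑ j, w j = 1, such that ∑ j, w j • ζ j = ∑ i, p i • ξ i (the mean is preserved) and ∑ j, w j * g(ζ j) ≥ ∑ i, p i * g(ξ i). (This is the mathematical content of the paper's Corollary 1: for the worst-case expectation of a convex recourse function under first-moment constraints, distributions supported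 on the vertices ξ^s(z) = ξ^{Ls} + ⟨ξ^{Us} − ξ^{Ls}, z⟩, z ∈ {0,1}^{|K|×|T|}, of the box suffice.) -/
/-!
The convex hull of the graph of `g` over a set `V` consists of the pairs (mean, expected value of
`g`) of the finitely supported distributions on `V`. It projects onto the convex hull of `V`, and
it lies in the epigraph of `g` when `g` is convex, so over every scenario there is such a pair
whose value is at least that of `g`. Averaging these pairs stays inside the hull because the hull
is convex. The vertices of a box form a product of pairs, and the hull of a product is the product
of the hulls, so the hull of the vertices is the box.
-/

open Set

theorem exists_mem_convexHull_graphOn_ge {𝕜 E β : Type*} [Semiring 𝕜] [PartialOrder 𝕜]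
    [AddCommMonoid E] [Module 𝕜 E] [AddCommMonoid β] [PartialOrder β] [IsOrderedAddMonoid β]
    [Module 𝕜 β] [PosSMulMono 𝕜 β] {V : Set E} {g : E → β}
    (hg : ConvexOn 𝕜 (convexHull 𝕜 V) g) {x : E} (hx : x ∈ convexHull 𝕜 V) :
    ∃ q ∈ convexHull 𝕜 (V.graphOn g), q.1 = x ∧ g x ≤ q.2 := by
  have hfst : Prod.fst '' convexHull 𝕜 (V.graphOn g) = convexHull 𝕜 V :=
    ((LinearMap.fst 𝕜 E β).image_convexHull _).trans (by simp)
  have hepi : convexHull 𝕜 (V.graphOn g) ⊆ {q | q.1 ∈ convexHull 𝕜 V ∧ g q.1 ≤ q.2} := by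
    refine convexHull_min ?_ hg.convex_epigraph
    rintro _ ⟨v, hv, rfl⟩
    exact ⟨subset_convexHull 𝕜 V hv, le_rfl⟩
  obtain ⟨q, hq, rfl⟩ := hfst.ge hx
  exact ⟨q, hq, rfl, (hepi hq).2⟩

section ConvexHull

variable {𝕜 E β : Type*} [Field 𝕜] [LinearOrder 𝕜] [IsStrictOrderedRing 𝕜]
  [AddCommGroup E] [Module 𝕜 E] [AddCommGroup β] [Module 𝕜 β] {V : Set E} {g : E → β}

theorem exists_fin_of_mem_convexHull {x : E} (hx : x ∈ convexHull 𝕜 V) :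
    ∃ (n : ℕ) (z : Fin n → E) (w : Fin n → 𝕜),
      (∀ j, z j ∈ V) ∧ 0 ≤ w ∧ ∑ j, w j = 1 ∧ ∑ j, w j • z j = x := by
  obtain ⟨κ, _, w, z, hw, hw_sum, hz, hmean⟩ := mem_convexHull_iff_exists_fintype.mp hx
  let e := (Fintype.equivFin κ).symm
  refine ⟨Fintype.card κ, z ∘ e, w ∘ e, fun j ↦ hz (e j), fun j ↦ hw (e j), ?_, ?_⟩
  · exact (e.sum_comp w).trans hw_sum
  · exact (e.sum_comp fun k ↦ w k • z k).trans hmean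

theorem exists_fin_of_mem_convexHull_graphOn {q : E × β}
    (hq : q ∈ convexHull 𝕜 (V.graphOn g)) :
    ∃ (n : ℕ) (ζ : Fin n → E) (w : Fin n → 𝕜), (∀ j, ζ j ∈ V) ∧
      0 ≤ w ∧ ∑ j, w j = 1 ∧ ∑ j, w j • ζ j = q.1 ∧ ∑ j, w j • g (ζ j) = q.2 := by
  obtain ⟨n, z, w, hz, hw, hw_sum, rfl⟩ := exists_fin_of_mem_convexHull hq
  choose ζ hζ hz_eq using hz
  refine ⟨n, ζ, w, hζ, hw, hw_sum, ?_, ?_⟩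
  · simp only [← hz_eq, Prod.fst_sum, Prod.smul_fst]
  · simp only [← hz_eq, Prod.snd_sum, Prod.smul_snd]

theorem vertex_supported_distribution_suffices_general [PartialOrder β]
    [IsOrderedAddMonoid β] [PosSMulMono 𝕜 β] {α : Type*} [Fintype α]
    (hg : ConvexOn 𝕜 (convexHull 𝕜 V) g) {ξ : α → E} (hξ : ∀ i, ξ i ∈ convexHull 𝕜 V)
    {p : α → 𝕜} (hp : 0 ≤ p) (hsum : ∑ i, p i = 1) :
    ∃ (m' : ℕ) (ζ : Fin m' → E) (w : Fin m' → 𝕜), (∀ j, ζ j ∈ V) ∧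
      0 ≤ w ∧ ∑ j, w j = 1 ∧ ∑ j, w j • ζ j = ∑ i, p i • ξ i ∧
      ∑ i, p i • g (ξ i) ≤ ∑ j, w j • g (ζ j) := by
  choose q hq hq_fst hq_snd using fun i ↦ exists_mem_convexHull_graphOn_ge hg (hξ i)
  have hmix : ∑ i, p i • q i ∈ convexHull 𝕜 (V.graphOn g) :=
    (convex_convexHull 𝕜 _).sum_mem (fun i _ ↦ hp i) hsum fun i _ ↦ hq i
  obtain ⟨m', ζ, w, hζ, hw, hw_sum, hmean, hvalue⟩ := exists_fin_of_mem_convexHull_graphOn hmix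
  refine ⟨m', ζ, w, hζ, hw, hw_sum, ?_, ?_⟩
  · simp only [hmean, Prod.fst_sum, Prod.smul_fst, hq_fst]
  · calc
      ∑ i, p i • g (ξ i) ≤ ∑ i, p i • (q i).2 :=
        Finset.sum_le_sum fun i _ ↦ smul_le_smul_of_nonneg_left (hq_snd i) (hp i)
      _ = ∑ j, w j • g (ζ j) := by simp only [hvalue, Prod.snd_sum, Prod.smul_snd]

end ConvexHull

/-- The vertices of the box with opposite corners `L` and `U`, the points that support the
worst-case distributions. A side may be degenerate (`L i = U i`) or reversed. -/
def boxVertices {ι α : Type*} (L U : ι → α) : Set (ι → α) :=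
  {x | ∀ i, x i = L i ∨ x i = U i}

theorem boxVertices_eq_pi {ι α : Type*} (L U : ι → α) :
    boxVertices L U = univ.pi fun i ↦ {L i, U i} := by
  ext x
  simp only [boxVertices, mem_ofPred_eq, mem_univ_pi, mem_insert_iff, mem_singleton_iff]

theorem convexHull_boxVertices {ι 𝕜 : Type*} [Finite ι] [Field 𝕜] [LinearOrder 𝕜]
    [IsStrictOrderedRing 𝕜] (L U : ι → 𝕜) : convexHull 𝕜 (boxVertices L U) = uIcc L U := by
  simp only [boxVertices_eq_pi, convexHull_pi, convexHull_pair, segment_eq_uIcc, pi_univ_uIcc]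

/-- Corollary 1: for the worst-case expectation of a convex recourse function
under first-moment constraints, distributions supported on the vertices of the
box suffice: any finitely supported distribution can be replaced by one supported
on vertices with the same mean and a weakly larger expected value. -/
theorem vertex_supported_distribution_suffices
    {ι : Type*} [Fintype ι]
    (L U : ι → ℝ) (hLU : ∀ i, L i ≤ U i)
    (g : (ι → ℝ) → ℝ) (hg : ConvexOn ℝ (Set.Icc L U) g)
    (m : ℕ) (ξ : Fin m → ι → ℝ) (hξ : ∀ i, ξ i ∈ Set.Icc L U)
    (p : Fin m → ℝ) (hp : 0 ≤ p) (hsum : ∑ i, p i = 1) :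
    ∃ (m' : ℕ) (ζ : Fin m' → ι → ℝ) (w : Fin m' → ℝ),
      (∀ j, ζ j ∈ Set.Icc L U) ∧ (∀ j i, ζ j i = L i ∨ ζ j i = U i) ∧
      0 ≤ w ∧ (∑ j, w j) = 1 ∧
      (∑ j, w j • ζ j) = (∑ i, p i • ξ i) ∧
      (∑ i, p i * g (ξ i)) ≤ (∑ j, w j * g (ζ j)) := by
  have hbox : convexHull ℝ (boxVertices L U) = Icc L U :=
    (convexHull_boxVertices L U).trans (uIcc_of_le hLU)
  simp only [← hbox] at hg hξ ⊢
  obtain ⟨m', ζ, w, hζ, hw⟩ := vertex_supported_distribution_suffices_general hg hξ hp hsum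
  exact ⟨m', ζ, w, fun j ↦ subset_convexHull ℝ _ (hζ j), hζ, hw⟩
end
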